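/- Let U ⊆ ℝ² be open, let u : ℝ² → ℝ be real-analytic on U, and let z₀ ∈ U be a local minimum point of u. Then for every ε > 0 such that the closed ball of radius ε around z₀ is contained in U, there exists δ > 0 with the following property: for every T ∈ (0,∞] and every differentiable γ : [0,T) → ℝ² with γ(0) in the open ball of radius δ around z₀ and γ′(t) = −∇u(γ(t)) for all t ∈ [0,T), one has γ(t) in the open ball of radius ε around z₀ for all t ∈ [0,T); moreover, if T = ∞, then γ(t) converges as t → +∞ to a point of the closed ball of radius ε around z₀. -/

import Mathlib

open Metric Set Filter Topology MeasureTheory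

noncomputable section

abbrev E2 := EuclideanSpace ℝ (Fin 2)

/-!
Where the Łojasiewicz gradient inequality holds, gradient trajectories have small length. In the
plane an elementary argument shows that it can only fail on a countable set. Unless `u` is locally
constant, some derivative of `u` in a fixed direction does not vanish near the given point, so the
critical points fall into countably many classes according to the order `n + 2` to which `u` minus
its value is flat in that direction. At an accumulation point `p` of one class, the implicit
function theorem puts the class on an analytic curve along which `u` is critical, hence constant;
if `d` is the distance to that curve in the chosen direction, then `|u - u p| ≈ d ^ (n + 2)` and
`‖∇u‖ ≳ d ^ (n + 1)`. The other points of a class are isolated in it, hence countable in number.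

A countable exceptional set is harmless: some small sphere around the minimum point avoids it, and
by compactness trajectories meeting that sphere at a low enough level of `u` do not get far from
it. A trajectory in a compact set either has a limit point satisfying the inequality, and then
converges to it, or has countably many limit points, and then only one, as it would meet every
sphere separating two of them infinitely often.
-/

open scoped Gradient

/-- The Łojasiewicz gradient inequality `|u z - u p| ^ α ≤ C * ‖fderiv ℝ u z‖` near `p`. The
exponent `α = 0` is allowed and, as `0 ^ 0 = 1` for real powers, it says that the derivative is
bounded away from zero. -/
def LojasiewiczAt {E : Type*} [NormedAddCommGroup E] [NormedSpace ℝ E] (u : E → ℝ) (p : E) :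
    Prop :=
  ∃ α ∈ Ico (0 : ℝ) 1, (fun z ↦ |u z - u p| ^ α) =O[𝓝 p] fderiv ℝ u

section Descent

variable {E : Type*} [NormedAddCommGroup E] [InnerProductSpace ℝ E] [CompleteSpace E]
  {u : E → ℝ} {γ : ℝ → E} {s : Set ℝ} {a b c t : ℝ}

/-- `γ` solves the gradient-descent equation `γ' = -∇u(γ)` on `s`, with one-sided derivatives at
endpoints of `s`. -/
def IsGradientDescentOn (u : E → ℝ) (γ : ℝ → E) (s : Set ℝ) : Prop :=
  IsIntegralCurveOn γ (fun _ z ↦ -∇ u z) s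

/-- Gradient-descent trajectories of `u` starting in `S` remain in `W`. -/
def TrapsDescent (u : E → ℝ) (S W : Set E) : Prop :=
  ∀ ⦃γ : ℝ → E⦄ ⦃a b : ℝ⦄, IsGradientDescentOn u γ (Icc a b) → γ a ∈ S → MapsTo γ (Icc a b) W

theorem le_mul_sq_mul_rpow_neg {C α g w : ℝ} (hg : 0 ≤ g) (hw : 0 < w) (h : w ^ α ≤ C * g) :
    g ≤ C * g ^ 2 * w ^ (-α) := by
  calc g = w ^ α * w ^ (-α) * g := by
        rw [← Real.rpow_add hw, add_neg_cancel, Real.rpow_zero, one_mul]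
    _ ≤ C * g * w ^ (-α) * g := by gcongr
    _ = C * g ^ 2 * w ^ (-α) := by ring

theorem norm_gradient (u : E → ℝ) (z : E) : ‖∇ u z‖ = ‖fderiv ℝ u z‖ := by
  simp [gradient]

namespace IsGradientDescentOn

theorem mono {s' : Set ℝ} (hγ : IsGradientDescentOn u γ s) (hs : s' ⊆ s) :
    IsGradientDescentOn u γ s' :=
  IsIntegralCurveOn.mono hγ hs

protected theorem continuousOn (hγ : IsGradientDescentOn u γ s) : ContinuousOn γ s :=
  IsIntegralCurveOn.continuousOn hγ

theorem hasDerivWithinAt_comp (hγ : IsGradientDescentOn u γ s) (ht : t ∈ s)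
    (hu : DifferentiableAt ℝ u (γ t)) :
    HasDerivWithinAt (u ∘ γ) (-‖fderiv ℝ u (γ t)‖ ^ 2) s t := by
  have h := hu.hasFDerivAt.comp_hasDerivWithinAt t (hγ t ht)
  rwa [map_neg, ← inner_gradient_left, real_inner_self_eq_norm_sq, norm_gradient] at h

theorem continuousOn_comp (hγ : IsGradientDescentOn u γ s)
    (hu : ∀ t ∈ s, DifferentiableAt ℝ u (γ t)) : ContinuousOn (u ∘ γ) s :=
  fun t ht ↦ (hγ.hasDerivWithinAt_comp ht (hu t ht)).continuousWithinAt

theorem antitoneOn_comp (hγ : IsGradientDescentOn u γ s) (hs : Convex ℝ s)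
    (hu : ∀ t ∈ s, DifferentiableAt ℝ u (γ t)) : AntitoneOn (u ∘ γ) s :=
  antitoneOn_of_hasDerivWithinAt_nonpos hs (hγ.continuousOn_comp hu)
    (fun t ht ↦ (hγ.hasDerivWithinAt_comp (interior_subset ht)
      (hu t (interior_subset ht))).mono interior_subset)
    fun _ _ ↦ neg_nonpos.2 (sq_nonneg _)

theorem hasDerivWithinAt_comp_Ici (hγ : IsGradientDescentOn u γ (Icc a b)) (ht : t ∈ Ico a b)
    (hu : DifferentiableAt ℝ u (γ t)) :
    HasDerivWithinAt (u ∘ γ) (-‖fderiv ℝ u (γ t)‖ ^ 2) (Ici t) t :=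
  (hγ.hasDerivWithinAt_comp (Ico_subset_Icc_self ht) hu).mono_of_mem_nhdsWithin
    (Icc_mem_nhdsGE_of_mem ht)

theorem fderiv_eq_zero_of_eq_lowerBound (hγ : IsGradientDescentOn u γ (Icc a b))
    (hu : ∀ t ∈ Icc a b, DifferentiableAt ℝ u (γ t)) (hc : ∀ t ∈ Icc a b, c ≤ u (γ t))
    (ht : t ∈ Ico a b) (htc : u (γ t) = c) :
    fderiv ℝ u (γ t) = 0 ∧ u ∘ γ =ᶠ[𝓝[≥] t] fun _ ↦ c := by
  have hconst : u ∘ γ =ᶠ[𝓝[≥] t] fun _ ↦ c := by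
    filter_upwards [Icc_mem_nhdsGE_of_mem ht, self_mem_nhdsWithin] with τ hτ htτ
    exact le_antisymm (htc ▸ hγ.antitoneOn_comp (convex_Icc a b) hu (Ico_subset_Icc_self ht) hτ htτ)
      (hc τ hτ)
  have hzero : -‖fderiv ℝ u (γ t)‖ ^ 2 = 0 :=
    (uniqueDiffOn_Ici t t self_mem_Ici).eq_deriv _
      (hγ.hasDerivWithinAt_comp_Ici ht (hu t (Ico_subset_Icc_self ht)))
      ((hasDerivWithinAt_const t (Ici t) c).congr_of_eventuallyEq hconst htc)
  exact ⟨by simpa using hzero, hconst⟩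

/-- At times when `u ∘ γ` equals `c` the factor `0 ^ (θ - 1)` is meaningless, but there
`fderiv ℝ u` vanishes. -/
theorem hasDerivWithinAt_rpow_sub (hγ : IsGradientDescentOn u γ (Icc a b))
    (hu : ∀ t ∈ Icc a b, DifferentiableAt ℝ u (γ t)) (hc : ∀ t ∈ Icc a b, c ≤ u (γ t))
    (ht : t ∈ Ico a b) (θ : ℝ) :
    HasDerivWithinAt (fun τ ↦ (u (γ τ) - c) ^ θ)
      (-‖fderiv ℝ u (γ t)‖ ^ 2 * θ * (u (γ t) - c) ^ (θ - 1)) (Ici t) t := by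
  by_cases htc : u (γ t) = c
  · obtain ⟨hzero, hconst⟩ := hγ.fderiv_eq_zero_of_eq_lowerBound hu hc ht htc
    simp only [hzero, norm_zero, ne_eq, OfNat.ofNat_ne_zero, not_false_eq_true, zero_pow, neg_zero,
      zero_mul]
    refine (hasDerivWithinAt_const t (Ici t) ((0 : ℝ) ^ θ)).congr_of_eventuallyEq ?_ (by simp [htc])
    filter_upwards [hconst] with τ hτ
    rw [show u (γ τ) = c from hτ, sub_self]
  · exact ((hγ.hasDerivWithinAt_comp_Ici ht (hu t (Ico_subset_Icc_self ht))).sub_const c).rpow_const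
      (.inl (sub_ne_zero.2 htc))

theorem norm_sub_le (hγ : IsGradientDescentOn u γ (Icc a b)) (hab : a ≤ b)
    (hu : ∀ t ∈ Icc a b, DifferentiableAt ℝ u (γ t)) (hc : ∀ t ∈ Icc a b, c ≤ u (γ t))
    {C α : ℝ} (hC : 0 ≤ C) (hα : α < 1)
    (hloj : ∀ t ∈ Icc a b, (u (γ t) - c) ^ α ≤ C * ‖fderiv ℝ u (γ t)‖) :
    ‖γ b - γ a‖ ≤ C / (1 - α) * (u (γ a) - c) ^ (1 - α) := by
  have hα' : 0 < 1 - α := sub_pos.2 hα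
  set B : ℝ → ℝ := fun t ↦ C / (1 - α) * ((u (γ a) - c) ^ (1 - α) - (u (γ t) - c) ^ (1 - α))
  set B' : ℝ → ℝ := fun t ↦
    C / (1 - α) * -(-‖fderiv ℝ u (γ t)‖ ^ 2 * (1 - α) * (u (γ t) - c) ^ (1 - α - 1))
  have hspeed : ∀ t ∈ Ico a b, ‖-∇ u (γ t)‖ ≤ B' t := by
    intro t ht
    have ht' := Ico_subset_Icc_self ht
    rw [norm_neg, norm_gradient]
    rcases (hc t ht').eq_or_lt with htc | htc
    · simp [B', (hγ.fderiv_eq_zero_of_eq_lowerBound hu hc ht htc.symm).1]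
    · calc ‖fderiv ℝ u (γ t)‖
          ≤ C * ‖fderiv ℝ u (γ t)‖ ^ 2 * (u (γ t) - c) ^ (-α) :=
            le_mul_sq_mul_rpow_neg (norm_nonneg _) (sub_pos.2 htc) (hloj t ht')
        _ = B' t := by
            simp only [B', show 1 - α - 1 = -α by ring]
            field_simp
  calc ‖γ b - γ a‖ ≤ B b :=
        image_norm_le_of_norm_deriv_right_le_deriv_boundary' (f' := fun t ↦ -∇ u (γ t)) (B' := B')
          (hγ.continuousOn.sub continuousOn_const)
          (fun t ht ↦ ((hγ t (Ico_subset_Icc_self ht)).mono_of_mem_nhdsWithin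
            (Icc_mem_nhdsGE_of_mem ht)).sub_const _)
          (by simp)
          (continuousOn_const.mul (continuousOn_const.sub
            (((hγ.continuousOn_comp hu).sub continuousOn_const).rpow_const
              fun _ _ ↦ .inr hα'.le)))
          (fun t ht ↦ ((hγ.hasDerivWithinAt_rpow_sub hu hc ht _).const_sub _).const_mul _)
          hspeed (right_mem_Icc.2 hab)
    _ ≤ C / (1 - α) * (u (γ a) - c) ^ (1 - α) := by
        refine mul_le_mul_of_nonneg_left (sub_le_self _ ?_) (div_nonneg hC hα'.le)
        exact Real.rpow_nonneg (sub_nonneg.2 (hc b (right_mem_Icc.2 hab))) _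

end IsGradientDescentOn

theorem exists_eq_forall_le_of_continuousOn {f : ℝ → ℝ} {r : ℝ} (hf : ContinuousOn f (Icc a b))
    (ha : f a ≤ r) (ht : t ∈ Icc a b) (hr : r ≤ f t) :
    ∃ τ ∈ Icc a b, f τ = r ∧ ∀ σ ∈ Icc a τ, f σ ≤ r := by
  have hcpt : IsCompact (Icc a b ∩ f ⁻¹' {r}) :=
    isCompact_Icc.of_isClosed_subset
      (hf.preimage_isClosed_of_isClosed isClosed_Icc isClosed_singleton) inter_subset_left
  obtain ⟨σ, hσ, hσr⟩ :=
    intermediate_value_Icc ht.1 (hf.mono (Icc_subset_Icc_right ht.2)) ⟨ha, hr⟩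
  obtain ⟨τ, ⟨hτ, hτr⟩, hleast⟩ :=
    hcpt.exists_isLeast ⟨σ, Icc_subset_Icc_right ht.2 hσ, hσr⟩
  refine ⟨τ, hτ, hτr, fun σ hσ ↦ ?_⟩
  by_contra! hlt
  have hσb : σ ≤ b := hσ.2.trans hτ.2
  obtain ⟨σ', hσ', hσ'r⟩ :=
    intermediate_value_Icc hσ.1 (hf.mono (Icc_subset_Icc_right hσb)) ⟨ha, hlt.le⟩
  have hτσ' : τ ≤ σ' := hleast ⟨Icc_subset_Icc_right hσb hσ', hσ'r⟩
  have hστ : σ = τ := le_antisymm hσ.2 (hτσ'.trans hσ'.2)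
  exact hlt.ne' (hστ ▸ hτr)

theorem exists_dist_eq_of_notMem_ball {X : Type*} [PseudoMetricSpace X] {f : ℝ → X} {x : X}
    {r : ℝ} (hf : ContinuousOn f (Icc a b)) (ha : f a ∈ ball x r) (ht : t ∈ Icc a b)
    (hft : f t ∉ ball x r) :
    ∃ τ ∈ Icc a b, dist (f τ) x = r ∧ MapsTo f (Icc a τ) (closedBall x r) :=
  exists_eq_forall_le_of_continuousOn
    ((continuous_id.dist continuous_const).comp_continuousOn hf) (le_of_lt ha) ht (not_lt.1 hft)

theorem LojasiewiczAt.exists_tendsto_zero_norm_sub_le {p : E} (h : LojasiewiczAt u p)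
    (hu : ∀ᶠ z in 𝓝 p, DifferentiableAt ℝ u z) :
    ∃ r > 0, ∃ ℓ : E → ℝ, Tendsto ℓ (𝓝 p) (𝓝 0) ∧ ∀ ⦃γ : ℝ → E⦄ ⦃a b : ℝ⦄, a ≤ b →
      IsGradientDescentOn u γ (Icc a b) → MapsTo γ (Icc a b) (ball p r) →
      (∀ t ∈ Icc a b, u p ≤ u (γ t)) → ‖γ b - γ a‖ ≤ ℓ (γ a) := by
  obtain ⟨α, ⟨-, hα⟩, hO⟩ := h
  obtain ⟨C, hC, hO⟩ := hO.exists_pos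
  obtain ⟨r, hr, hball⟩ := Metric.eventually_nhds_iff_ball.1 (hO.bound.and hu)
  refine ⟨r, hr, fun z ↦ C / (1 - α) * |u z - u p| ^ (1 - α), ?_, fun γ a b hab hγ hγr hc ↦ ?_⟩
  · have := ((hu.self_of_nhds.continuousAt.sub_const (u p)).abs.rpow_const
      (.inr (sub_pos.2 hα).le)).const_mul (C / (1 - α))
    simpa [ContinuousAt, Real.zero_rpow (sub_pos.2 hα).ne'] using this
  · have habs : ∀ t ∈ Icc a b, |u (γ t) - u p| = u (γ t) - u p := fun t ht ↦
      abs_of_nonneg (sub_nonneg.2 (hc t ht))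
    beta_reduce
    rw [habs a (left_mem_Icc.2 hab)]
    refine hγ.norm_sub_le hab (fun t ht ↦ (hball _ (hγr ht)).2) hc hC.le hα fun t ht ↦ ?_
    rw [← habs t ht]
    exact (le_abs_self _).trans (hball _ (hγr ht)).1

theorem LojasiewiczAt.exists_pos_forall_mapsTo_ball {p : E} (h : LojasiewiczAt u p)
    (hu : ∀ᶠ z in 𝓝 p, DifferentiableAt ℝ u z) {ρ : ℝ} (hρ : 0 < ρ) :
    ∃ δ > 0, ∀ ⦃γ : ℝ → E⦄ ⦃a b : ℝ⦄, IsGradientDescentOn u γ (Icc a b) → γ a ∈ ball p δ →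
      (∀ t ∈ Icc a b, γ t ∈ ball p ρ → u p ≤ u (γ t)) → MapsTo γ (Icc a b) (ball p ρ) := by
  obtain ⟨r₀, hr₀, ℓ, hℓ, hlen⟩ := h.exists_tendsto_zero_norm_sub_le hu
  obtain ⟨r, hr, hrr₀⟩ := exists_between (lt_min hr₀ hρ)
  obtain ⟨hrr₀, hrρ⟩ := lt_min_iff.1 hrr₀
  obtain ⟨δ, hδ, hδℓ⟩ :=
    Metric.eventually_nhds_iff_ball.1 (hℓ.eventually_lt_const (half_pos hr))
  refine ⟨min δ (r / 2), by positivity, fun γ a b hγ ha hlow t ht ↦ ?_⟩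
  by_contra hout
  have haδ : γ a ∈ ball p δ := ball_subset_ball (min_le_left _ _) ha
  have har : dist (γ a) p < r / 2 := ha.trans_le (min_le_right _ _)
  obtain ⟨τ, hτ, hτr, hin⟩ := exists_dist_eq_of_notMem_ball hγ.continuousOn
    (har.trans (half_lt_self hr)) ht fun h ↦ hout (ball_subset_ball hrρ.le h)
  have hsub : Icc a τ ⊆ Icc a b := Icc_subset_Icc_right hτ.2
  have hdist : ‖γ τ - γ a‖ < r / 2 :=
    (hlen hτ.1 (hγ.mono hsub) (hin.mono_right (closedBall_subset_ball hrr₀)) fun σ hσ ↦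
      hlow σ (hsub hσ) (closedBall_subset_ball hrρ (hin hσ))).trans_lt (hδℓ _ haδ)
  linarith [dist_triangle (γ τ) (γ a) p, dist_eq_norm (γ τ) (γ a)]

theorem exists_trapsDescent_sublevel {K W : Set E} {m₀ : ℝ} (hK : IsCompact K)
    (hKW : K ⊆ W) (hW : IsOpen W) (hu : DifferentiableOn ℝ u W) (hm₀ : ∀ z ∈ W, m₀ ≤ u z)
    (hloj : ∀ p ∈ K, LojasiewiczAt u p) :
    ∃ m > m₀, TrapsDescent u (K ∩ {z | u z < m}) W := by
  refine hK.induction_on (p := fun S ↦ ∃ m > m₀, TrapsDescent u (S ∩ {z | u z < m}) W)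
    ⟨m₀ + 1, lt_add_one m₀, fun γ a b _ ha ↦ ha.1.elim⟩
    (fun S S' hSS' ⟨m, hm, hS'⟩ ↦ ⟨m, hm, fun γ a b hγ ha ↦ hS' hγ ⟨hSS' ha.1, ha.2⟩⟩)
    (fun S S' ⟨m, hm, hS⟩ ⟨m', hm', hS'⟩ ↦ ⟨min m m', lt_min hm hm', ?_⟩)
    fun p hp ↦ ?_
  · rintro γ a b hγ ⟨ha | ha, hlt⟩
    exacts [hS hγ ⟨ha, hlt.out.trans_le (min_le_left m m')⟩,
      hS' hγ ⟨ha, hlt.out.trans_le (min_le_right m m')⟩]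
  have hWp : W ∈ 𝓝 p := hW.mem_nhds (hKW hp)
  rcases (hm₀ p (hKW hp)).eq_or_lt with heq | hlt
  · obtain ⟨ρ, hρ, hρW⟩ := Metric.mem_nhds_iff.1 hWp
    obtain ⟨δ, hδ, htrap⟩ := (hloj p hp).exists_pos_forall_mapsTo_ball
      (hu.eventually_differentiableAt hWp) hρ
    exact ⟨ball p δ, mem_nhdsWithin_of_mem_nhds (ball_mem_nhds p hδ), m₀ + 1, lt_add_one m₀,
      fun γ a b hγ ha ↦ (htrap hγ ha.1 fun t _ ht ↦ heq ▸ hm₀ _ (hρW ht)).mono_right hρW⟩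
  · obtain ⟨m, hm, hmp⟩ := exists_between hlt
    refine ⟨{z | m < u z}, mem_nhdsWithin_of_mem_nhds ?_, m, hm, fun γ a b _ ha ↦
      (lt_asymm ha.1.out ha.2.out).elim⟩
    exact (hu.differentiableAt hWp).continuousAt.eventually_const_lt hmp

theorem exists_sphere_disjoint_of_countable {X : Type*} [PseudoMetricSpace X] {S : Set X}
    (hS : S.Countable) (x : X) {R : ℝ} (hR : 0 < R) : ∃ r ∈ Ioo 0 R, Disjoint (sphere x r) S := by
  obtain ⟨r, hrS, hr⟩ := ((hS.image (dist · x)).dense_compl ℝ).exists_between hR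
  exact ⟨r, hr, disjoint_left.2 fun z hz hzS ↦ hrS ⟨z, hzS, hz⟩⟩

theorem exists_trapsDescent_ball [ProperSpace E] {z₀ : E} {R : ℝ} (hR : 0 < R)
    (hu : DifferentiableOn ℝ u (ball z₀ R)) (hmin : ∀ z ∈ ball z₀ R, u z₀ ≤ u z)
    (hbad : {z ∈ ball z₀ R | ¬LojasiewiczAt u z}.Countable) :
    ∃ δ > 0, TrapsDescent u (ball z₀ δ) (ball z₀ R) := by
  obtain ⟨r, ⟨hr, hrR⟩, hdisj⟩ := exists_sphere_disjoint_of_countable hbad z₀ hR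
  have hclosed : closedBall z₀ r ⊆ ball z₀ R := closedBall_subset_ball hrR
  have hsphere : sphere z₀ r ⊆ ball z₀ R := sphere_subset_closedBall.trans hclosed
  obtain ⟨m, hm, htrap⟩ := exists_trapsDescent_sublevel (isCompact_sphere z₀ r) hsphere
    isOpen_ball hu hmin fun p hp ↦ by_contra fun hp' ↦ disjoint_left.1 hdisj hp ⟨hsphere hp, hp'⟩
  have hcont : ContinuousAt u z₀ := (hu.differentiableAt (ball_mem_nhds z₀ hR)).continuousAt
  obtain ⟨δ, hδ, hδm⟩ := Metric.eventually_nhds_iff_ball.1 (hcont.eventually_lt_const hm)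
  refine ⟨min δ r, lt_min hδ hr, fun γ a b hγ ha t ht ↦ ?_⟩
  by_contra hout
  obtain ⟨τ, hτ, hτr, hle⟩ := exists_dist_eq_of_notMem_ball hγ.continuousOn
    (ball_subset_ball (min_le_right _ _) ha) ht fun h ↦ hout (ball_subset_ball hrR.le h)
  have huτ : u (γ τ) ≤ u (γ a) :=
    (hγ.mono (Icc_subset_Icc_right hτ.2)).antitoneOn_comp (convex_Icc a τ)
      (fun σ hσ ↦ hu.differentiableAt (isOpen_ball.mem_nhds (hclosed (hle hσ))))
      (left_mem_Icc.2 hτ.1) (right_mem_Icc.2 hτ.1) hτ.1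
  rcases le_total t τ with htτ | hτt
  · exact hout (hclosed (hle ⟨ht.1, htτ⟩))
  · exact hout (htrap (hγ.mono (Icc_subset_Icc_left hτ.1))
      ⟨hτr, huτ.trans_lt (hδm _ (ball_subset_ball (min_le_left _ _) ha))⟩ ⟨hτt, ht.2⟩)

theorem frequently_eq_of_continuousOn_Ici {f : ℝ → ℝ} {r : ℝ} (hf : ContinuousOn f (Ici a))
    (hlt : ∃ᶠ t in atTop, f t < r) (hgt : ∃ᶠ t in atTop, r < f t) : ∃ᶠ t in atTop, f t = r := by
  refine frequently_atTop.2 fun T ↦ ?_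
  obtain ⟨t₁, ht₁, h₁⟩ := frequently_atTop.1 hlt (max a T)
  obtain ⟨t₂, ht₂, h₂⟩ := frequently_atTop.1 hgt t₁
  obtain ⟨t, ht, htr⟩ := intermediate_value_Icc ht₂
    (hf.mono fun σ hσ ↦ (le_max_left a T).trans (ht₁.trans hσ.1)) ⟨h₁.le, h₂.le⟩
  exact ⟨t, (le_max_right a T).trans (ht₁.trans ht.1), htr⟩

theorem exists_tendsto_of_countable_mapClusterPt {X : Type*} [MetricSpace X] {K : Set X}
    {f : ℝ → X} (hK : IsCompact K) (hf : ContinuousOn f (Ici a)) (hfK : MapsTo f (Ici a) K)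
    (hcount : {x | MapClusterPt x atTop f}.Countable) : ∃ x ∈ K, Tendsto f atTop (𝓝 x) := by
  have hev : ∀ᶠ t in atTop, f t ∈ K := (eventually_ge_atTop a).mono hfK
  obtain ⟨x, hxK, hx⟩ := hK.exists_mapClusterPt_of_frequently hev.frequently
  refine ⟨x, hxK, hK.le_nhds_of_unique_clusterPt hev fun y _ hy ↦ ?_⟩
  by_contra hyx
  obtain ⟨r, ⟨hr, hry⟩, hdisj⟩ := exists_sphere_disjoint_of_countable hcount x (dist_pos.2 hyx)
  have hdist : Continuous (dist · x) := continuous_id.dist continuous_const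
  have hfreq : ∃ᶠ t in atTop, dist (f t) x = r :=
    frequently_eq_of_continuousOn_Ici (hdist.comp_continuousOn hf)
      (hx.frequently (ball_mem_nhds x hr))
      (MapClusterPt.frequently hy (hdist.continuousAt.eventually_const_lt hry))
  obtain ⟨w, ⟨-, hwr⟩, hw⟩ :=
    (hK.inter_right (isClosed_sphere (x := x) (ε := r))).exists_mapClusterPt_of_frequently
      ((hfreq.and_eventually hev).mono fun t ht ↦ ⟨ht.2, ht.1⟩)
  exact disjoint_left.1 hdisj hwr hw

theorem IsGradientDescentOn.le_of_mapClusterPt {p : E} (hγ : IsGradientDescentOn u γ (Ici a))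
    (hu : ∀ t ∈ Ici a, DifferentiableAt ℝ u (γ t)) (hup : ContinuousAt u p)
    (hp : MapClusterPt p atTop γ) (ht : t ∈ Ici a) : u p ≤ u (γ t) := by
  by_contra! hlt
  obtain ⟨τ, hτ, htτ⟩ := ((hp.frequently (hup.eventually_const_lt hlt)).and_eventually
    (eventually_ge_atTop t)).exists
  exact hτ.not_ge (hγ.antitoneOn_comp (convex_Ici a) hu ht (ht.out.trans htτ) htτ)

theorem LojasiewiczAt.tendsto_of_mapClusterPt {p : E} (h : LojasiewiczAt u p)
    (hup : ∀ᶠ z in 𝓝 p, DifferentiableAt ℝ u z) (hγ : IsGradientDescentOn u γ (Ici a))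
    (hu : ∀ t ∈ Ici a, DifferentiableAt ℝ u (γ t)) (hp : MapClusterPt p atTop γ) :
    Tendsto γ atTop (𝓝 p) := by
  refine nhds_basis_ball.tendsto_right_iff.2 fun ρ hρ ↦ ?_
  obtain ⟨δ, hδ, htrap⟩ := h.exists_pos_forall_mapsTo_ball hup hρ
  obtain ⟨t₁, ht₁, hat₁⟩ :=
    ((hp.frequently (ball_mem_nhds p hδ)).and_eventually (eventually_ge_atTop a)).exists
  have hsub : ∀ t, Icc t₁ t ⊆ Ici a := fun t σ hσ ↦ hat₁.trans hσ.1
  filter_upwards [eventually_ge_atTop t₁] with t ht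
  exact htrap (hγ.mono (hsub t)) ht₁ (fun σ hσ _ ↦
    hγ.le_of_mapClusterPt hu hup.self_of_nhds.continuousAt hp (hsub t hσ)) (right_mem_Icc.2 ht)

theorem IsGradientDescentOn.exists_tendsto {K : Set E} (hγ : IsGradientDescentOn u γ (Ici a))
    (hK : IsCompact K) (hγK : MapsTo γ (Ici a) K)
    (hu : ∀ p ∈ K, ∀ᶠ z in 𝓝 p, DifferentiableAt ℝ u z)
    (hbad : {z ∈ K | ¬LojasiewiczAt u z}.Countable) : ∃ z ∈ K, Tendsto γ atTop (𝓝 z) := by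
  have hclK : ∀ p, MapClusterPt p atTop γ → p ∈ K := fun p hp ↦
    hK.isClosed.mem_of_mapClusterPt hp ((eventually_ge_atTop a).mono hγK)
  by_cases hloj : ∃ p, MapClusterPt p atTop γ ∧ LojasiewiczAt u p
  · obtain ⟨p, hp, hpl⟩ := hloj
    exact ⟨p, hclK p hp, hpl.tendsto_of_mapClusterPt (hu p (hclK p hp)) hγ
      (fun t ht ↦ (hu _ (hγK ht)).self_of_nhds) hp⟩
  · push Not at hloj
    have hsub : {p | MapClusterPt p atTop γ} ⊆ {z ∈ K | ¬LojasiewiczAt u z} :=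
      fun p hp ↦ ⟨hclK p hp, hloj p hp⟩
    exact exists_tendsto_of_countable_mapClusterPt hK hγ.continuousOn hγK (hbad.mono hsub)

end Descent

section Lojasiewicz

variable {E E' : Type*} [NormedAddCommGroup E] [NormedSpace ℝ E] [NormedAddCommGroup E']
  [NormedSpace ℝ E'] {u : E → ℝ} {p : E}

namespace LojasiewiczAt

theorem of_fderiv_ne_zero (hu : ContinuousAt (fderiv ℝ u) p) (hp : fderiv ℝ u p ≠ 0) :
    LojasiewiczAt u p := by
  refine ⟨0, ⟨le_rfl, one_pos⟩, ?_⟩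
  simp only [Real.rpow_zero]
  refine (Asymptotics.isBigO_const_left_iff_pos_le_norm one_ne_zero).2
    ⟨‖fderiv ℝ u p‖ / 2, half_pos (norm_pos_iff.2 hp), ?_⟩
  exact (hu.norm.eventually_const_lt (half_lt_self (norm_pos_iff.2 hp))).mono fun _ ↦ le_of_lt

theorem of_eventually_eq (hu : ∀ᶠ z in 𝓝 p, u z = u p) : LojasiewiczAt u p := by
  refine ⟨1 / 2, by norm_num, (Asymptotics.isBigO_zero (fderiv ℝ u) _).congr' ?_ .rfl⟩
  filter_upwards [hu] with z hz
  simp [hz]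

theorem of_isBigO_pow {d : E → ℝ} {k : ℕ} (hu : (fun z ↦ u z - u p) =O[𝓝 p] fun z ↦ d z ^ (k + 1))
    (hd : (fun z ↦ d z ^ k) =O[𝓝 p] fderiv ℝ u) : LojasiewiczAt u p := by
  have hk : (0 : ℝ) < k + 1 := by positivity
  refine ⟨k / (k + 1), ⟨by positivity, (div_lt_one hk).2 (lt_add_one _)⟩, ?_⟩
  have hpow : (fun z ↦ (|d z| ^ (k + 1)) ^ (k / (k + 1) : ℝ)) = fun z ↦ |d z ^ k| := by
    ext z
    rw [← Real.rpow_natCast, ← Real.rpow_mul (abs_nonneg _), Nat.cast_succ,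
      mul_div_cancel₀ _ hk.ne', Real.rpow_natCast, abs_pow]
  have habs : (fun z ↦ |u z - u p|) =O[𝓝 p] fun z ↦ |d z| ^ (k + 1) := by
    simpa only [abs_pow] using hu.abs_abs
  refine (habs.rpow (by positivity) (.of_forall fun z ↦ by positivity)).trans ?_
  rw [hpow]
  exact hd.abs_left

theorem of_comp {A : E' → E} {B : E → E'} (hB : ContinuousAt B p) (hA : ContDiffAt ℝ 1 A (B p))
    (hAB : ∀ᶠ z in 𝓝 p, A (B z) = z) (hu : ∀ᶠ z in 𝓝 p, DifferentiableAt ℝ u z)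
    (h : LojasiewiczAt (u ∘ A) (B p)) : LojasiewiczAt u p := by
  obtain ⟨α, hα, hO⟩ := h
  refine ⟨α, hα, ?_⟩
  have hchain : ∀ᶠ z in 𝓝 p, fderiv ℝ (u ∘ A) (B z) = fderiv ℝ u z ∘L fderiv ℝ A (B z) := by
    have hAdiff : ∀ᶠ z in 𝓝 p, DifferentiableAt ℝ A (B z) :=
      hB.eventually ((hA.eventually (by simp)).mono fun q hq ↦ hq.differentiableAt one_ne_zero)
    filter_upwards [hAB, hu, hAdiff] with z hz huz hAz
    rw [fderiv_comp (B z) (by rwa [hz]) hAz, hz]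
  have hbdd : (fun z ↦ fderiv ℝ A (B z)) =O[𝓝 p] fun _ ↦ (1 : ℝ) :=
    ((hA.continuousAt_fderiv one_ne_zero).comp hB).tendsto.isBigO_one ℝ
  have hfderiv : (fun z ↦ fderiv ℝ (u ∘ A) (B z)) =O[𝓝 p] fderiv ℝ u := by
    refine (Asymptotics.IsBigO.of_bound 1 ?_).trans
      (((Asymptotics.isBigO_refl (fun z ↦ ‖fderiv ℝ u z‖) _).mul hbdd.norm_left).congr_right
        (fun z ↦ mul_one _)).of_norm_right
    filter_upwards [hchain] with z hz
    simpa [hz] using (fderiv ℝ u z).opNorm_comp_le (fderiv ℝ A (B z))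
  refine ((hO.comp_tendsto hB).congr' ?_ .rfl).trans hfderiv
  filter_upwards [hAB] with z hz
  simp [hz, hAB.self_of_nhds]

end LojasiewiczAt

theorem eventually_eq_of_eventually_hasFDerivAt_zero {f : E → E'}
    (hf : ∀ᶠ z in 𝓝 p, HasFDerivAt f (0 : E →L[ℝ] E') z) : ∀ᶠ z in 𝓝 p, f z = f p := by
  obtain ⟨r, hr, hball⟩ := Metric.eventually_nhds_iff_ball.1 hf
  filter_upwards [ball_mem_nhds p hr] with z hz
  exact isOpen_ball.is_const_of_fderiv_eq_zero (convex_ball p r).isPreconnected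
    (fun w hw ↦ (hball w hw).differentiableAt.differentiableWithinAt)
    (fun w hw ↦ (hball w hw).fderiv) hz (mem_ball_self hr)

end Lojasiewicz

theorem exists_eq_iteratedDeriv_mul_pow_div_factorial {f : ℝ → ℝ} {a y : ℝ} {n : ℕ}
    (hf : ∀ t ∈ uIcc a y, ContDiffAt ℝ n f t) (h0 : ∀ j < n, iteratedDeriv j f a = 0) :
    ∃ ξ ∈ uIcc a y, f y = iteratedDeriv n f ξ * (y - a) ^ n / n.factorial := by
  rcases n with _ | n
  · exact ⟨y, right_mem_uIcc, by simp⟩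
  rcases eq_or_ne a y with rfl | hay
  · exact ⟨a, left_mem_uIcc, by simpa using h0 0 n.succ_pos⟩
  have htaylor : taylorWithinEval f n (uIcc a y) a y = 0 := by
    rw [taylor_within_apply]
    refine Finset.sum_eq_zero fun j hj ↦ ?_
    have hjn : j < n + 1 := Finset.mem_range.1 hj
    rw [iteratedDerivWithin_eq_iteratedDeriv (uniqueDiffOn_uIcc hay)
      ((hf a left_mem_uIcc).of_le (by exact_mod_cast hjn.le)) left_mem_uIcc, h0 j hjn, smul_zero]
  obtain ⟨ξ, hξ, hξeq⟩ := taylor_mean_remainder_lagrange_iteratedDeriv hay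
    fun t ht ↦ (hf t ht).contDiffWithinAt
  exact ⟨ξ, Ioo_subset_Icc_self hξ, by rwa [htaylor, sub_zero] at hξeq⟩

section DerivSnd

variable {X : Type*} [NormedAddCommGroup X] [NormedSpace ℝ X] {F : X × ℝ → ℝ} {p : X × ℝ}
  {φ : X → ℝ} {k : ℕ}

/-- The partial derivative of `F` in its last, real variable. -/
def derivSnd (F : X × ℝ → ℝ) (z : X × ℝ) : ℝ :=
  fderiv ℝ F z (0, 1)

theorem hasDerivAt_derivSnd {x : X} {t : ℝ} (hF : DifferentiableAt ℝ F (x, t)) :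
    HasDerivAt (fun s ↦ F (x, s)) (derivSnd F (x, t)) t :=
  hF.hasFDerivAt.comp_hasDerivAt t ((hasDerivAt_const t x).prodMk (hasDerivAt_id t))

theorem derivSnd_isBigO_fderiv (F : X × ℝ → ℝ) (l : Filter (X × ℝ)) :
    derivSnd F =O[l] fderiv ℝ F :=
  (ContinuousLinearMap.apply ℝ ℝ ((0 : X), (1 : ℝ))).isBigO_comp (fderiv ℝ F) l

theorem derivSnd_iterate_sub_const (F : X × ℝ → ℝ) (c : ℝ) (j : ℕ) :
    derivSnd^[j + 1] (fun z ↦ F z - c) = derivSnd^[j + 1] F := by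
  simp only [Function.iterate_succ_apply]
  congr 1
  ext z
  simp only [derivSnd, fderiv_sub_const]

theorem analyticAt_derivSnd (hF : AnalyticAt ℝ F p) : AnalyticAt ℝ (derivSnd F) p :=
  ((ContinuousLinearMap.apply ℝ ℝ ((0 : X), (1 : ℝ))).analyticAt _).comp hF.fderiv

theorem analyticAt_derivSnd_iterate (hF : AnalyticAt ℝ F p) (j : ℕ) :
    AnalyticAt ℝ (derivSnd^[j] F) p := by
  induction j with
  | zero => exact hF
  | succ j ih => exact Function.iterate_succ_apply' derivSnd j F ▸ analyticAt_derivSnd ih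

theorem iteratedDeriv_eq_derivSnd_iterate {x : X} {t : ℝ} (hF : AnalyticAt ℝ F (x, t)) (j : ℕ) :
    iteratedDeriv j (fun s ↦ F (x, s)) t = derivSnd^[j] F (x, t) := by
  induction j generalizing t with
  | zero => simp
  | succ j ih =>
    have hline : ContinuousAt (fun s : ℝ ↦ (x, s)) t := by fun_prop
    have heq : iteratedDeriv j (fun s ↦ F (x, s)) =ᶠ[𝓝 t] fun s ↦ derivSnd^[j] F (x, s) :=
      (hline.eventually hF.eventually_analyticAt).mono fun s hs ↦ ih hs
    rw [iteratedDeriv_succ, heq.deriv_eq, Function.iterate_succ_apply']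
    exact (hasDerivAt_derivSnd (analyticAt_derivSnd_iterate hF j).differentiableAt).deriv

theorem eventually_exists_eq_derivSnd_iterate_mul_pow (hF : AnalyticAt ℝ F p)
    (hφ : Tendsto φ (𝓝 p.1) (𝓝 p.2))
    (h0 : ∀ j < k, ∀ᶠ x in 𝓝 p.1, derivSnd^[j] F (x, φ x) = 0) :
    ∀ᶠ z in 𝓝 p, ∃ ξ ∈ uIcc (φ z.1) z.2,
      F z = derivSnd^[k] F (z.1, ξ) * (z.2 - φ z.1) ^ k / k.factorial := by
  have hfst : Tendsto Prod.fst (𝓝 p) (𝓝 p.1) := continuousAt_fst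
  have hseg : Tendsto (fun z : X × ℝ ↦ uIcc (φ z.1) z.2) (𝓝 p) (𝓝 p.2).smallSets :=
    (hφ.comp hfst).uIcc continuousAt_snd
  obtain ⟨P, hP, Q, hQ, hPQ⟩ := eventually_prod_iff.1
    (nhds_prod_eq (x := p.1) (y := p.2) ▸ hF.eventually_analyticAt)
  have h0' : ∀ᶠ x in 𝓝 p.1, ∀ j < k, derivSnd^[j] F (x, φ x) = 0 :=
    (Set.finite_lt_nat k).eventually_all.2 h0
  filter_upwards [hfst.eventually (hP.and h0'), hseg.eventually hQ.smallSets] with z ⟨hPz, hz0⟩ hQz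
  have han : ∀ t ∈ uIcc (φ z.1) z.2, AnalyticAt ℝ F (z.1, t) := fun t ht ↦ hPQ hPz (hQz t ht)
  obtain ⟨ξ, hξ, hξeq⟩ := exists_eq_iteratedDeriv_mul_pow_div_factorial
    (f := fun t ↦ F (z.1, t)) (n := k)
    (fun t ht ↦ ((han t ht).comp (analyticAt_const.prod analyticAt_id)).contDiffAt)
    fun j hj ↦ (iteratedDeriv_eq_derivSnd_iterate (han _ left_mem_uIcc) j).trans (hz0 j hj)
  exact ⟨ξ, hξ, by rwa [iteratedDeriv_eq_derivSnd_iterate (han ξ hξ)] at hξeq⟩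

theorem isTheta_pow_sub_of_derivSnd_iterate (hF : AnalyticAt ℝ F p)
    (hφ : Tendsto φ (𝓝 p.1) (𝓝 p.2))
    (h0 : ∀ j < k, ∀ᶠ x in 𝓝 p.1, derivSnd^[j] F (x, φ x) = 0) (hk : derivSnd^[k] F p ≠ 0) :
    F =Θ[𝓝 p] fun z ↦ (z.2 - φ z.1) ^ k := by
  have hfst : Tendsto Prod.fst (𝓝 p) (𝓝 p.1) := continuousAt_fst
  obtain ⟨ξ, hξ⟩ := (eventually_exists_eq_derivSnd_iterate_mul_pow hF hφ h0).choice
  have hξlim : Tendsto ξ (𝓝 p) (𝓝 p.2) :=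
    ((hφ.comp hfst).uIcc continuousAt_snd).of_smallSets (hξ.mono fun _ h ↦ h.1)
  have hcoeff : Tendsto (fun z ↦ derivSnd^[k] F (z.1, ξ z) / k.factorial) (𝓝 p)
      (𝓝 (derivSnd^[k] F p / k.factorial)) :=
    ((analyticAt_derivSnd_iterate hF k).continuousAt.tendsto.comp
      (hfst.prodMk_nhds hξlim)).div_const _
  have hcoeff_ne : derivSnd^[k] F p / k.factorial ≠ 0 :=
    div_ne_zero hk (Nat.cast_ne_zero.2 k.factorial_ne_zero)
  have hcoeff_theta : (fun z ↦ derivSnd^[k] F (z.1, ξ z) / k.factorial) =Θ[𝓝 p] fun _ ↦ (1 : ℝ) :=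
    ((Asymptotics.isEquivalent_const_iff_tendsto hcoeff_ne).2 hcoeff).isTheta.trans
      (Asymptotics.isTheta_const_const hcoeff_ne one_ne_zero)
  have hF_eq : F =ᶠ[𝓝 p]
      fun z ↦ derivSnd^[k] F (z.1, ξ z) / k.factorial * (z.2 - φ z.1) ^ k := by
    filter_upwards [hξ] with z hz
    rw [hz.2, div_mul_eq_mul_div]
  refine hF_eq.trans_isTheta ?_
  simpa only [one_mul] using hcoeff_theta.mul (Asymptotics.isTheta_refl _ (𝓝 p))

theorem exists_analyticAt_implicit [CompleteSpace X] (hF : AnalyticAt ℝ F p)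
    (hp : derivSnd F p ≠ 0) :
    ∃ φ : X → ℝ, AnalyticAt ℝ φ p.1 ∧ φ p.1 = p.2 ∧ ∀ᶠ z in 𝓝 p, F z = F p → φ z.1 = z.2 := by
  have hcd : ContDiffAt ℝ ⊤ F p := hF.contDiffAt
  have hinv : (fderiv ℝ F p ∘L .inr ℝ X ℝ).IsInvertible :=
    ⟨ContinuousLinearEquiv.unitsEquivAut ℝ (Units.mk0 _ hp), by ext; simp [derivSnd]⟩
  exact ⟨hcd.implicitFunction (by simp) hinv,
    (hcd.contDiffAt_implicitFunction (by simp) hinv).analyticAt,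
    hcd.implicitFunction_apply_self (by simp) hinv,
    (hcd.eventually_apply_eq_iff_implicitFunction (by simp) hinv).mono fun _ h ↦ h.1⟩

theorem eventually_eq_of_fderiv_eq_zero_on_graph (hF : AnalyticAt ℝ F p)
    (hφ : AnalyticAt ℝ φ p.1) (hφp : φ p.1 = p.2)
    (hcrit : ∀ᶠ x in 𝓝 p.1, fderiv ℝ F (x, φ x) = 0) : ∀ᶠ x in 𝓝 p.1, F (x, φ x) = F p := by
  have hgraph : Tendsto (fun x ↦ (x, φ x)) (𝓝 p.1) (𝓝 p) := by
    have h : ContinuousAt (fun x ↦ (x, φ x)) p.1 := continuousAt_id.prodMk hφ.continuousAt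
    simpa only [ContinuousAt, hφp] using h
  have hderiv : ∀ᶠ x in 𝓝 p.1, HasFDerivAt (fun x ↦ F (x, φ x)) (0 : X →L[ℝ] ℝ) x := by
    filter_upwards [hcrit, hgraph.eventually hF.eventually_analyticAt,
      hφ.eventually_analyticAt] with x hx hFx hφx
    have h := hFx.differentiableAt.hasFDerivAt
    rw [hx] at h
    simpa [Function.comp_def] using
      h.comp x ((hasFDerivAt_id x).prodMk hφx.differentiableAt.hasFDerivAt)
  simpa only [hφp] using eventually_eq_of_eventually_hasFDerivAt_zero hderiv

end DerivSnd

section Plane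

variable {F : ℝ × ℝ → ℝ} {p : ℝ × ℝ}

theorem eventually_eq_zero_on_graph_of_accPt {Y : Type*} [NormedAddCommGroup Y] [NormedSpace ℝ Y]
    {A : ℝ × ℝ → Y} {φ : ℝ → ℝ} {S : Set (ℝ × ℝ)} (hA : AnalyticAt ℝ A p)
    (hφ : AnalyticAt ℝ φ p.1) (hφp : φ p.1 = p.2) (hSφ : ∀ᶠ z in 𝓝 p, z ∈ S → φ z.1 = z.2)
    (hS : AccPt p (𝓟 S)) (hAS : ∀ z ∈ S, A z = 0) : ∀ᶠ x in 𝓝 p.1, A (x, φ x) = 0 := by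
  have hgraph : AnalyticAt ℝ (fun x ↦ A (x, φ x)) p.1 :=
    AnalyticAt.fun_comp (by simpa only [hφp] using hA) (analyticAt_id.prod hφ)
  refine hgraph.frequently_zero_iff_eventually_zero.1 (frequently_nhdsWithin_iff.2 ?_)
  have hfreq : ∃ᶠ z in 𝓝 p, A (z.1, φ z.1) = 0 ∧ z.1 ∈ ({p.1}ᶜ : Set ℝ) := by
    refine ((frequently_nhdsWithin_iff.1 (accPt_iff_frequently_nhdsNE.1 hS)).and_eventually
      hSφ).mono fun z ⟨⟨hzS, hzp⟩, hzφ⟩ ↦ ⟨by simpa only [hzφ hzS] using hAS z hzS, fun hz ↦ ?_⟩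
    have hz1 : z.1 = p.1 := hz
    exact hzp (Prod.ext hz1 (by rw [← hzφ hzS, hz1, hφp]))
  exact (continuousAt_fst (p := p)).tendsto.frequently hfreq

/-- The critical points `z` of `F` at which `t ↦ F (z.1, t) - F z` vanishes to order exactly
`n + 2` at `z.2`. -/
def criticalSetOfOrder (F : ℝ × ℝ → ℝ) (n : ℕ) : Set (ℝ × ℝ) :=
  {z | fderiv ℝ F z = 0 ∧ (∀ j ≤ n, derivSnd^[j + 1] F z = 0) ∧ derivSnd^[n + 2] F z ≠ 0}

theorem exists_mem_criticalSetOfOrder (hF : fderiv ℝ F p = 0) {N : ℕ}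
    (hN : derivSnd^[N + 1] F p ≠ 0) : ∃ n, p ∈ criticalSetOfOrder F n := by
  classical
  have hex : ∃ j, derivSnd^[j + 1] F p ≠ 0 := ⟨N, hN⟩
  obtain ⟨n, hn⟩ : ∃ n, Nat.find hex = n + 1 := by
    refine Nat.exists_eq_succ_of_ne_zero fun h ↦ (Nat.find_eq_zero hex).1 h ?_
    simp [derivSnd, hF]
  refine ⟨n, hF, fun j hj ↦ not_not.1 (Nat.find_min hex (by omega)), ?_⟩
  simpa only [hn] using Nat.find_spec hex

theorem LojasiewiczAt.of_accPt_criticalSetOfOrder (hF : AnalyticAt ℝ F p) {n : ℕ}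
    (hp : p ∈ criticalSetOfOrder F n) (hacc : AccPt p (𝓟 (criticalSetOfOrder F n))) :
    LojasiewiczAt F p := by
  obtain ⟨-, hp0, hpn⟩ := hp
  obtain ⟨φ, hφ, hφp, himp⟩ := exists_analyticAt_implicit (analyticAt_derivSnd_iterate hF (n + 1))
    (by rwa [← Function.iterate_succ_apply' derivSnd])
  have hgraph : ∀ᶠ z in 𝓝 p, z ∈ criticalSetOfOrder F n → φ z.1 = z.2 :=
    himp.mono fun z hz hzc ↦ hz ((hzc.2.1 n le_rfl).trans (hp0 n le_rfl).symm)
  have hφlim : Tendsto φ (𝓝 p.1) (𝓝 p.2) := hφp ▸ hφ.continuousAt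
  have hzero : ∀ j ≤ n, ∀ᶠ x in 𝓝 p.1, derivSnd^[j + 1] F (x, φ x) = 0 := fun j hj ↦
    eventually_eq_zero_on_graph_of_accPt (analyticAt_derivSnd_iterate hF _) hφ hφp hgraph hacc
      fun z hz ↦ hz.2.1 j hj
  have hconst : ∀ᶠ x in 𝓝 p.1, F (x, φ x) = F p :=
    eventually_eq_of_fderiv_eq_zero_on_graph hF hφ hφp
      (eventually_eq_zero_on_graph_of_accPt hF.fderiv hφ hφp hgraph hacc fun z hz ↦ hz.1)
  have hvalue : (fun z ↦ F z - F p) =Θ[𝓝 p] fun z ↦ (z.2 - φ z.1) ^ (n + 2) := by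
    refine isTheta_pow_sub_of_derivSnd_iterate (hF.sub analyticAt_const) hφlim (fun j hj ↦ ?_)
      (by rwa [derivSnd_iterate_sub_const])
    rcases j with _ | j
    · exact hconst.mono fun x hx ↦ sub_eq_zero.2 hx
    · rw [derivSnd_iterate_sub_const]
      exact hzero j (by omega)
  have hslope : derivSnd F =Θ[𝓝 p] fun z ↦ (z.2 - φ z.1) ^ (n + 1) :=
    isTheta_pow_sub_of_derivSnd_iterate (analyticAt_derivSnd hF) hφlim
      (fun j hj ↦ hzero j (Nat.lt_succ_iff.1 hj)) hpn
  exact .of_isBigO_pow hvalue.isBigO (hslope.symm.isBigO.trans (derivSnd_isBigO_fderiv F _))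

theorem countable_setOf_not_accPt {X : Type*} [TopologicalSpace X] [HereditarilyLindelofSpace X]
    (S : Set X) : {x ∈ S | ¬AccPt x (𝓟 S)}.Countable := by
  refine (HereditarilyLindelofSpace.isLindelof _).countable_of_isDiscrete
    (isDiscrete_iff_nhdsNE.2 fun x hx ↦ ?_)
  rw [← disjoint_iff, disjoint_principal_right]
  filter_upwards [not_frequently.1 (mt accPt_iff_frequently_nhdsNE.2 hx.2)] with y hy hyS
  exact hy hyS.1

theorem exists_mem_nhds_countable_not_lojasiewiczAt_of_derivSnd (hF : AnalyticAt ℝ F p) {N : ℕ}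
    (hN : derivSnd^[N + 1] F p ≠ 0) : ∃ s ∈ 𝓝 p, {z ∈ s | ¬LojasiewiczAt F z}.Countable := by
  refine ⟨{z | AnalyticAt ℝ F z ∧ derivSnd^[N + 1] F z ≠ 0}, hF.eventually_analyticAt.and
    ((analyticAt_derivSnd_iterate hF _).continuousAt.eventually_ne hN), ?_⟩
  refine (countable_iUnion fun n ↦ countable_setOf_not_accPt (criticalSetOfOrder F n)).mono ?_
  rintro z ⟨⟨hz, hzN⟩, hbad⟩
  have hcrit : fderiv ℝ F z = 0 := by_contra fun h ↦
    hbad (.of_fderiv_ne_zero hz.fderiv.continuousAt h)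
  obtain ⟨n, hn⟩ := exists_mem_criticalSetOfOrder hcrit hzN
  exact mem_iUnion.2 ⟨n, hn, fun hacc ↦ hbad (.of_accPt_criticalSetOfOrder hz hn hacc)⟩

end Plane

section CountableExceptions

variable {E Y : Type*} [NormedAddCommGroup E] [NormedSpace ℝ E] [NormedAddCommGroup Y]
  [NormedSpace ℝ Y]

theorem eqOn_const_of_iteratedDeriv_eq_zero [CompleteSpace Y] {f : ℝ → Y} {S : Set ℝ}
    {a : ℝ} (hf : AnalyticOnNhd ℝ f S) (hS : IsPreconnected S) (ha : a ∈ S)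
    (h0 : ∀ n, iteratedDeriv (n + 1) f a = 0) : EqOn f (fun _ ↦ f a) S := by
  have hconst : AnalyticAt ℝ (fun _ : ℝ ↦ f a) a := analyticAt_const
  have horder : analyticOrderAt (fun t ↦ f t - f a) a = ⊤ := by
    refine ENat.eq_top_iff_forall_ge.2 fun n ↦ ?_
    refine (natCast_le_analyticOrderAt_iff_iteratedDeriv_eq_zero
      ((hf a ha).fun_sub hconst)).2 fun j _ ↦ ?_
    rcases j with _ | j
    · simp
    · simpa [iteratedDeriv_fun_sub (hf a ha).contDiffAt hconst.contDiffAt,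
        iteratedDeriv_const] using h0 j
  exact hf.eqOn_of_preconnected_of_eventuallyEq analyticOnNhd_const hS ha
    ((analyticOrderAt_eq_top.1 horder).mono fun t ht ↦ sub_eq_zero.1 ht)

theorem exists_iteratedDeriv_line_ne_zero [CompleteSpace Y] {f : E → Y} {z₀ : E}
    (hf : AnalyticAt ℝ f z₀) (hne : ¬∀ᶠ z in 𝓝 z₀, f z = f z₀) :
    ∃ v N, iteratedDeriv (N + 1) (fun t : ℝ ↦ f (z₀ + t • v)) 0 ≠ 0 := by
  contrapose! hne
  obtain ⟨r, hr, hball⟩ := Metric.eventually_nhds_iff_ball.1 hf.eventually_analyticAt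
  filter_upwards [ball_mem_nhds z₀ hr] with z hz
  have hline : AnalyticOnNhd ℝ (fun t : ℝ ↦ f (z₀ + t • (z - z₀))) (Icc 0 1) := by
    intro t ht
    refine AnalyticAt.fun_comp (hball _ ?_) (by fun_prop)
    exact (convex_ball z₀ r).add_smul_sub_mem (mem_ball_self hr) hz ht
  simpa using eqOn_const_of_iteratedDeriv_eq_zero hline isPreconnected_Icc
    (left_mem_Icc.2 zero_le_one) (hne (z - z₀)) (right_mem_Icc.2 zero_le_one)

theorem exists_surjective_clm_apply_eq [FiniteDimensional ℝ E] (hE : Module.finrank ℝ E ≤ 2)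
    {v : E} (hv : v ≠ 0) : ∃ L : ℝ × ℝ →L[ℝ] E, Function.Surjective L ∧ L (0, 1) = v := by
  have hquot : Module.finrank ℝ (E ⧸ ℝ ∙ v) ≤ 1 := by
    have := (ℝ ∙ v).finrank_quotient_add_finrank
    rw [finrank_span_singleton hv] at this
    omega
  obtain ⟨w', hw'⟩ := finrank_le_one_iff.1 hquot
  obtain ⟨w, rfl⟩ := Submodule.Quotient.mk_surjective _ w'
  refine ⟨(ContinuousLinearMap.fst ℝ ℝ ℝ).smulRight w + (ContinuousLinearMap.snd ℝ ℝ ℝ).smulRight v,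
    fun e ↦ ?_, by simp⟩
  obtain ⟨x, hx⟩ := hw' (Submodule.Quotient.mk e)
  obtain ⟨t, ht⟩ := Submodule.mem_span_singleton.1 ((Submodule.Quotient.eq _).1 hx.symm)
  exact ⟨(x, t), by simp [ht]⟩

theorem exists_mem_nhds_countable_not_lojasiewiczAt [FiniteDimensional ℝ E]
    (hE : Module.finrank ℝ E ≤ 2) {u : E → ℝ} {z₀ : E} (hu : AnalyticAt ℝ u z₀) :
    ∃ s ∈ 𝓝 z₀, {z ∈ s | ¬LojasiewiczAt u z}.Countable := by
  by_cases hconst : ∀ᶠ z in 𝓝 z₀, u z = u z₀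
  · refine ⟨_, hconst.eventually_nhds, countable_empty.mono fun z ⟨hz, hbad⟩ ↦ hbad ?_⟩
    exact .of_eventually_eq (hz.out.mono fun w hw ↦ hw.trans hz.out.self_of_nhds.symm)
  obtain ⟨v, N, hvN⟩ := exists_iteratedDeriv_line_ne_zero hu hconst
  have hv : v ≠ 0 := by
    rintro rfl
    simp [iteratedDeriv_const] at hvN
  obtain ⟨L, hL, hLv⟩ := exists_surjective_clm_apply_eq hE hv
  obtain ⟨R, hR⟩ := L.exists_rightInverse_of_surjective (LinearMap.range_eq_top.2 hL)
  set A : ℝ × ℝ → E := fun q ↦ z₀ + L q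
  set B : E → ℝ × ℝ := fun z ↦ R (z - z₀)
  have hAB : ∀ z, A (B z) = z := fun z ↦ by
    simpa [A, B] using congrArg (z₀ + ·) (DFunLike.congr_fun hR (z - z₀))
  have hA : ∀ q, AnalyticAt ℝ A q := fun q ↦ analyticAt_const.add (L.analyticAt q)
  have hB : Continuous B := by fun_prop
  have hA0 : A (0, 0) = z₀ := (congrArg (z₀ + ·) L.map_zero).trans (add_zero z₀)
  have hF : AnalyticAt ℝ (u ∘ A) (0, 0) := AnalyticAt.comp (by rwa [hA0]) (hA _)
  have hFN : derivSnd^[N + 1] (u ∘ A) (0, 0) ≠ 0 := by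
    have hLt : ∀ t : ℝ, L (0, t) = t • v := fun t ↦ by simp [← hLv, ← map_smul]
    simpa [← iteratedDeriv_eq_derivSnd_iterate hF, A, hLt] using hvN
  obtain ⟨s, hs, hcount⟩ := exists_mem_nhds_countable_not_lojasiewiczAt_of_derivSnd hF hFN
  refine ⟨B ⁻¹' s ∩ {z | AnalyticAt ℝ u z}, inter_mem
    (hB.continuousAt (by simpa [B] using! hs)) hu.eventually_analyticAt, (hcount.image A).mono ?_⟩
  rintro z ⟨⟨hzs, hz⟩, hbad⟩
  refine ⟨B z, ⟨hzs, fun h ↦ hbad ?_⟩, hAB z⟩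
  exact .of_comp hB.continuousAt (hA _).contDiffAt (.of_forall hAB)
    (hz.out.eventually_analyticAt.mono fun w hw ↦ hw.differentiableAt) h

end CountableExceptions

theorem local_min_lyapunov_stable_general {E : Type*} [NormedAddCommGroup E]
    [InnerProductSpace ℝ E] [FiniteDimensional ℝ E]
    (hE : Module.finrank ℝ E ≤ 2) {u : E → ℝ} {z₀ : E} (hu : AnalyticAt ℝ u z₀)
    (hmin : IsLocalMin u z₀) {ε : ℝ} (hε : 0 < ε) :
    ∃ δ > 0,
      (∀ (T : ℝ) (γ : ℝ → E), γ 0 ∈ ball z₀ δ → IsGradientDescentOn u γ (Ico 0 T) →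
        MapsTo γ (Ico 0 T) (ball z₀ ε)) ∧
      (∀ γ : ℝ → E, γ 0 ∈ ball z₀ δ → IsGradientDescentOn u γ (Ici 0) →
        MapsTo γ (Ici 0) (ball z₀ ε) ∧ ∃ zlim ∈ ball z₀ ε, Tendsto γ atTop (𝓝 zlim)) := by
  have : ProperSpace E := FiniteDimensional.proper_real E
  obtain ⟨s, hs, hcount⟩ := exists_mem_nhds_countable_not_lojasiewiczAt hE hu
  obtain ⟨R, hR, hball⟩ := nhds_basis_closedBall.mem_iff.1
    (inter_mem (inter_mem hs (ball_mem_nhds z₀ hε)) (hu.eventually_analyticAt.and hmin))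
  have hRε : closedBall z₀ R ⊆ ball z₀ ε := fun z hz ↦ (hball hz).1.2
  have hbad : {z ∈ closedBall z₀ R | ¬LojasiewiczAt u z}.Countable :=
    hcount.mono fun z ↦ And.imp_left fun hz ↦ (hball hz).1.1
  obtain ⟨δ, hδ, htrap⟩ := exists_trapsDescent_ball hR
    (fun z hz ↦ (hball (ball_subset_closedBall hz)).2.1.differentiableAt.differentiableWithinAt)
    (fun z hz ↦ (hball (ball_subset_closedBall hz)).2.2)
    (hbad.mono fun z ↦ And.imp_left fun hz ↦ ball_subset_closedBall hz)
  refine ⟨δ, hδ, fun T γ h0 hγ t ht ↦ hRε (ball_subset_closedBall ?_), fun γ h0 hγ ↦ ?_⟩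
  · exact htrap (hγ.mono (Icc_subset_Ico_right ht.2)) h0 (right_mem_Icc.2 ht.1)
  · have hγR : MapsTo γ (Ici 0) (closedBall z₀ R) := fun t ht ↦
      ball_subset_closedBall (htrap (hγ.mono Icc_subset_Ici_self) h0 (right_mem_Icc.2 ht))
    obtain ⟨zlim, hz, hlim⟩ := hγ.exists_tendsto (isCompact_closedBall z₀ R) hγR
      (fun p hp ↦ (hball hp).2.1.eventually_analyticAt.mono fun z hz ↦ hz.differentiableAt) hbad
    exact ⟨hγR.mono_right hRε, zlim, hRε hz, hlim⟩

/-- Lyapunov stability of a local minimum point of a real-analytic function with respect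
to the gradient-descent flow: trajectories starting close to the minimum point stay close,
and those defined for all positive times converge. -/
theorem local_min_lyapunov_stable
    (U : Set E2) (hUo : IsOpen U)
    (u : E2 → ℝ) (hu : AnalyticOnNhd ℝ u U)
    (z₀ : E2) (hz₀ : z₀ ∈ U) (hmin : IsLocalMin u z₀) :
    ∀ ε > 0, closedBall z₀ ε ⊆ U →
      ∃ δ > 0,
        (∀ T : ℝ, 0 < T → ∀ γ : ℝ → E2, γ 0 ∈ ball z₀ δ →
          (∀ t ∈ Ico (0:ℝ) T, HasDerivWithinAt γ (-(gradient u (γ t))) (Ico 0 T) t) →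
          ∀ t ∈ Ico (0:ℝ) T, γ t ∈ ball z₀ ε) ∧
        (∀ γ : ℝ → E2, γ 0 ∈ ball z₀ δ →
          (∀ t ∈ Ici (0:ℝ), HasDerivWithinAt γ (-(gradient u (γ t))) (Ici 0) t) →
          (∀ t ∈ Ici (0:ℝ), γ t ∈ ball z₀ ε) ∧
            ∃ zlim ∈ closedBall z₀ ε, Tendsto γ atTop (𝓝 zlim)) := by
  intro ε hε _
  obtain ⟨δ, hδ, hIco, hIci⟩ := local_min_lyapunov_stable_general (by simp) (hu z₀ hz₀) hmin hε
  exact ⟨δ, hδ, fun T _ γ h0 hγ ↦ hIco T γ h0 hγ, fun γ h0 hγ ↦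
    (hIci γ h0 hγ).imp_right fun ⟨z, hz, hlim⟩ ↦ ⟨z, ball_subset_closedBall hz, hlim⟩⟩
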